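/- Let Q : ℝ≥0 → Q̄_n be sufficiently exciting. Then every solution of the linear system ẋ(t) = −Q_t x(t) satisfies lim_{t→∞} x(t) = 0. -/

import Mathlib

open Matrix MeasureTheory Filter
open scoped Kronecker

noncomputable section

/-- Euclidean norm of a vector. -/
def eunorm {ι : Type*} [Fintype ι] (v : ι → ℝ) : ℝ := Real.sqrt (∑ i, v i ^ 2)

/-- Spectral (induced 2-) norm of a matrix. -/
def specNorm {m n : Type*} [Fintype m] [Fintype n] (M : Matrix m n ℝ) : ℝ :=
  sSup {c : ℝ | ∃ v : n → ℝ, eunorm v ≤ 1 ∧ c = eunorm (M.mulVec v)}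

/-- Smallest singular value of a matrix. -/
def sigmaMin {m n : Type*} [Fintype m] [Fintype n] (M : Matrix m n ℝ) : ℝ :=
  sInf {c : ℝ | ∃ v : n → ℝ, eunorm v = 1 ∧ c = eunorm (M.mulVec v)}

/-- Largest singular value of a matrix. -/
def sigmaMax {m n : Type*} [Fintype m] [Fintype n] (M : Matrix m n ℝ) : ℝ :=
  sSup {c : ℝ | ∃ v : n → ℝ, eunorm v = 1 ∧ c = eunorm (M.mulVec v)}

/-- A continuous-time interconnection matrix. -/
def IsInterconnection {p : ℕ} (Γ : Matrix (Fin p) (Fin p) ℝ) : Prop :=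
  (∀ i j, i ≠ j → 0 ≤ Γ i j) ∧
  ∀ i, Γ i i = -∑ j ∈ Finset.univ.filter (fun j => j ≠ i), Γ i j

/-- Connectedness of the graph of a matrix. -/
def ConnectedMat {p : ℕ} (Γ : Matrix (Fin p) (Fin p) ℝ) : Prop :=
  ∃ v : Fin p, ∀ u : Fin p, Relation.ReflTransGen (fun i j => 0 < Γ i j) u v

/-- Membership in `Q̄_n`: symmetric positive semidefinite with spectral norm at most 1. -/
def InQbar {n : ℕ} (R : Matrix (Fin n) (Fin n) ℝ) : Prop :=
  R.PosSemidef ∧ specNorm R ≤ 1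

/-- `δ(ε, T) = min{ε/2, ε³/(240 T⁵)}`. -/
def deltaCT (ε T : ℝ) : ℝ := min (ε / 2) (ε ^ 3 / (240 * T ^ 5))

/-- Sufficient excitation for `Q : ℝ≥0 → Q_n`. -/
def SuffExcitingCT {n : ℕ} (Q : ℝ → Matrix (Fin n) (Fin n) ℝ) : Prop :=
  ∃ ε T : ℕ → ℝ, (∀ i, 0 < ε i) ∧ (∀ i, 0 < T i) ∧
    (∀ i, ε i ≤ sigmaMin (Matrix.of fun a b =>
      ∫ t in (∑ j ∈ Finset.range i, T j)..((∑ j ∈ Finset.range i, T j) + T i), Q t a b)) ∧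
    Tendsto (fun N => ∑ i ∈ Finset.range N, deltaCT (ε i) (T i)) atTop atTop

/-- Persistence of excitation for `Q : ℝ≥0 → Q_n`. -/
def PersExcitingCT {n : ℕ} (Q : ℝ → Matrix (Fin n) (Fin n) ℝ) : Prop :=
  ∃ ε T : ℝ, 0 < ε ∧ 0 < T ∧ ∀ t : ℝ, 0 ≤ t →
    ε ≤ sigmaMin (Matrix.of fun a b => ∫ s in t..(t + T), Q s a b)

/-!
Since `0 ≤ Q ≤ 1`, one has `‖Q v‖ ^ 2 ≤ ⟪Q v, v⟫`, so the energy `‖x‖ ^ 2`, whose derivative is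
`-2 ⟪Q x, x⟫`, dissipates at least at rate `2 ‖ẋ‖ ^ 2`. By Cauchy–Schwarz a solution that loses
little energy during `[a, b]` therefore stays close to `x a`, and then `∫ ⟪Q x, x⟫` is comparable
to `∫ ⟪Q (x a), x a⟫`, which the excitation bounds below by `ε ‖x a‖ ^ 2`. Hence during an
excitation interval of length `T` the energy loses at least the fraction `ε / (1 + T ^ 2)`, and it
tends to zero as soon as these fractions sum to infinity. As `0 ≤ Q ≤ 1` also forces `ε ≤ T`, they
dominate `δ(ε, T)`.
-/

open Set Topology
open scoped RealInnerProductSpace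

section RealSequences

theorem tendsto_zero_of_mul_le_sub_succ {c u : ℕ → ℝ} (hc : ∀ i, 0 ≤ c i) (hu : ∀ i, 0 ≤ u i)
    (hcu : ∀ i, c i * u i ≤ u i - u (i + 1))
    (hsum : Tendsto (fun N => ∑ i ∈ Finset.range N, c i) atTop atTop) :
    Tendsto u atTop (𝓝 0) := by
  have hanti : Antitone u := antitone_nat_of_succ_le fun i =>
    sub_nonneg.1 ((mul_nonneg (hc i) (hu i)).trans (hcu i))
  have hbound (N : ℕ) : u N * ∑ i ∈ Finset.range N, c i ≤ u 0 := calc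
    u N * ∑ i ∈ Finset.range N, c i = ∑ i ∈ Finset.range N, c i * u N := by
      rw [mul_comm, Finset.sum_mul]
    _ ≤ ∑ i ∈ Finset.range N, (u i - u (i + 1)) := Finset.sum_le_sum fun i hi =>
      (mul_le_mul_of_nonneg_left (hanti (Finset.mem_range.1 hi).le) (hc i)).trans (hcu i)
    _ = u 0 - u N := Finset.sum_range_sub' u N
    _ ≤ u 0 := sub_le_self _ (hu N)
  refine squeeze_zero' (.of_forall hu) ?_ (hsum.const_div_atTop (u 0))
  filter_upwards [hsum.eventually_gt_atTop 0] with N hN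
  exact (le_div_iff₀ hN).2 (hbound N)

theorem tendsto_atTop_of_antitoneOn_of_tendsto_comp {α β ι : Type*} [Preorder α]
    [LinearOrder β] [TopologicalSpace β] [OrderTopology β] {f : α → β} {a : α} {c : β}
    (hf : AntitoneOn f (Ici a)) (hc : ∀ t ∈ Ici a, c ≤ f t) {l : Filter ι} [l.NeBot] {τ : ι → α}
    (hτ : ∀ i, τ i ∈ Ici a) (hfτ : Tendsto (f ∘ τ) l (𝓝 c)) : Tendsto f atTop (𝓝 c) := by
  refine tendsto_order.2 ⟨fun b hb => ?_, fun b hb => ?_⟩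
  · filter_upwards [Ici_mem_atTop a] with t ht using hb.trans_le (hc t ht)
  · obtain ⟨i, hi⟩ := (hfτ.eventually_lt_const hb).exists
    filter_upwards [Ici_mem_atTop (τ i)] with t ht
    exact (hf (hτ i) ((hτ i).trans ht) ht).trans_lt hi

theorem deltaCT_le_div_one_add_sq {ε T : ℝ} (hε : 0 < ε) (hεT : ε ≤ T) :
    deltaCT ε T ≤ ε / (1 + T ^ 2) := by
  have hT : 0 < T := hε.trans_le hεT
  rcases le_total T 1 with hT1 | hT1
  · have hden : 1 + T ^ 2 ≤ 2 := by linarith [pow_le_one₀ (n := 2) hT.le hT1]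
    exact (min_le_left _ _).trans (by gcongr)
  · refine (min_le_right _ _).trans ((div_le_div_iff₀ (by positivity) (by positivity)).2 ?_)
    have hden : 1 + T ^ 2 ≤ 240 * T ^ 3 := by
      linarith [one_le_pow₀ (n := 3) hT1, pow_le_pow_right₀ hT1 (by norm_num : 2 ≤ 3)]
    calc ε ^ 3 * (1 + T ^ 2) = ε * (ε ^ 2 * (1 + T ^ 2)) := by ring
      _ ≤ ε * (T ^ 2 * (240 * T ^ 3)) := by gcongr
      _ = ε * (240 * T ^ 5) := by ring

end RealSequences

section Operators

variable {E : Type*} [NormedAddCommGroup E] [InnerProductSpace ℝ E]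

/-- A linear operator is firmly nonexpansive if `‖A v‖ ^ 2 ≤ ⟪A v, v⟫` for all `v`. The matrices
of `Q̄_n` enter the dissipation estimates only through this inequality. -/
def IsFirmlyNonexpansive (A : E →ₗ[ℝ] E) : Prop :=
  ∀ v, ‖A v‖ ^ 2 ≤ ⟪A v, v⟫

theorem IsFirmlyNonexpansive.of_isPositive {A : E →ₗ[ℝ] E} (hA : A.IsPositive)
    (hnorm : ∀ v, ‖A v‖ ≤ ‖v‖) : IsFirmlyNonexpansive A := by
  intro v
  have hpos : 0 ≤ ⟪A (v - A v), v - A v⟫ := hA.inner_nonneg_left _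
  have hexpand : ⟪A (v - A v), v - A v⟫ = ⟪A v, v⟫ - 2 * ‖A v‖ ^ 2 + ⟪A (A v), A v⟫ := by
    rw [map_sub, inner_sub_left, inner_sub_right, inner_sub_right, hA.isSymmetric (A v) v,
      real_inner_self_eq_norm_sq]
    ring
  have hle : ⟪A (A v), A v⟫ ≤ ‖A v‖ ^ 2 := by
    rw [sq]
    exact (real_inner_le_norm _ _).trans (by gcongr; exact hnorm _)
  linarith

namespace IsFirmlyNonexpansive

variable {A : E →ₗ[ℝ] E}

theorem inner_nonneg (hA : IsFirmlyNonexpansive A) (v : E) : 0 ≤ ⟪A v, v⟫ :=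
  (sq_nonneg _).trans (hA v)

theorem norm_le (hA : IsFirmlyNonexpansive A) (v : E) : ‖A v‖ ≤ ‖v‖ := by
  nlinarith [hA v, real_inner_le_norm (A v) v, norm_nonneg (A v), norm_nonneg v]

theorem inner_le_norm_sq (hA : IsFirmlyNonexpansive A) (v : E) : ⟪A v, v⟫ ≤ ‖v‖ ^ 2 := by
  rw [sq]
  exact (real_inner_le_norm _ _).trans (by gcongr; exact hA.norm_le v)

theorem inner_sub_le (hA : IsFirmlyNonexpansive A) (v w : E) :
    ⟪A (v - w), v - w⟫ ≤ 2 * ⟪A v, v⟫ + 2 * ‖w‖ ^ 2 := by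
  have hparallelogram :
      ⟪A (v - w), v - w⟫ + ⟪A (v + w), v + w⟫ = 2 * ⟪A v, v⟫ + 2 * ⟪A w, w⟫ := by
    simp only [map_sub, map_add, inner_sub_left, inner_sub_right, inner_add_left, inner_add_right]
    ring
  linarith [hA.inner_nonneg (v + w), hA.inner_le_norm_sq w]

end IsFirmlyNonexpansive

theorem mul_norm_sq_le_inner_of_forall_le_norm [FiniteDimensional ℝ E] {A : E →ₗ[ℝ] E}
    (hA : A.IsPositive) {c : ℝ} (hc : ∀ v, ‖v‖ = 1 → c ≤ ‖A v‖) (v : E) :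
    c * ‖v‖ ^ 2 ≤ ⟪A v, v⟫ := by
  let b := hA.isSymmetric.eigenvectorBasis rfl
  let μ := hA.isSymmetric.eigenvalues rfl
  have hb (i) : A (b i) = μ i • b i := hA.isSymmetric.apply_eigenvectorBasis rfl i
  have hμ (i) : c ≤ μ i := by
    have h := hc (b i) (b.norm_eq_one i)
    rwa [hb, norm_smul, b.norm_eq_one, mul_one,
      Real.norm_of_nonneg (hA.nonneg_eigenvalues rfl i)] at h
  calc c * ‖v‖ ^ 2 = ∑ i, c * ⟪b i, v⟫ ^ 2 := by rw [← b.sum_sq_inner_right, Finset.mul_sum]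
    _ ≤ ∑ i, μ i * ⟪b i, v⟫ ^ 2 := by gcongr with i; exact hμ i
    _ = ∑ i, ⟪A v, b i⟫ * ⟪b i, v⟫ := by
      congr! 1 with i
      rw [hA.isSymmetric v (b i), hb, inner_smul_right, real_inner_comm]
      ring
    _ = ⟪A v, v⟫ := b.sum_inner_mul_inner (A v) v

end Operators

section Dissipation

variable {E : Type*} [NormedAddCommGroup E] [InnerProductSpace ℝ E] {a b : ℝ}

/- Cauchy–Schwarz for `∫ f'`, in a form that needs no integrability: the derivative of
`T ^ 2 * g - 2 * T * ⟪d, f⟫ + t * ‖d‖ ^ 2` is at least `‖d - T • f'‖ ^ 2`. -/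
theorem norm_sub_sq_le_mul_sub_of_norm_deriv_sq_le (hab : a ≤ b) {f f' : ℝ → E} {g g' : ℝ → ℝ}
    (hf : ∀ t ∈ Icc a b, HasDerivWithinAt f (f' t) (Icc a b) t)
    (hg : ∀ t ∈ Icc a b, HasDerivWithinAt g (g' t) (Icc a b) t)
    (hfg : ∀ t ∈ Icc a b, ‖f' t‖ ^ 2 ≤ g' t) :
    ‖f b - f a‖ ^ 2 ≤ (b - a) * (g b - g a) := by
  rcases hab.eq_or_lt with rfl | hlt
  · simp
  set T := b - a
  have hT : 0 < T := sub_pos.2 hlt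
  set d := f b - f a with hd
  have hderiv (t) (ht : t ∈ Icc a b) :
      HasDerivWithinAt (fun s => T ^ 2 * g s - 2 * T * ⟪d, f s⟫ + s * ‖d‖ ^ 2)
        (T ^ 2 * g' t - 2 * T * ⟪d, f' t⟫ + 1 * ‖d‖ ^ 2) (Icc a b) t := by
    have hinner : HasDerivWithinAt (fun s => ⟪d, f s⟫) ⟪d, f' t⟫ (Icc a b) t := by
      simpa using (hasDerivWithinAt_const t _ d).inner ℝ (hf t ht)
    exact (((hg t ht).const_mul _).sub (hinner.const_mul _)).add
      ((hasDerivWithinAt_id t _).mul_const _)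
  have hmono := monotoneOn_of_hasDerivWithinAt_nonneg (convex_Icc a b)
    (fun t ht => (hderiv t ht).continuousWithinAt)
    (fun t ht => (hderiv t (interior_subset ht)).mono interior_subset) fun t ht => by
      have hsq : ‖d - T • f' t‖ ^ 2 = ‖d‖ ^ 2 - 2 * T * ⟪d, f' t⟫ + T ^ 2 * ‖f' t‖ ^ 2 := by
        rw [norm_sub_sq_real, inner_smul_right, norm_smul, mul_pow, Real.norm_eq_abs, sq_abs]
        ring
      have hle : T ^ 2 * ‖f' t‖ ^ 2 ≤ T ^ 2 * g' t := by
        gcongr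
        exact hfg t (interior_subset ht)
      linarith [sq_nonneg ‖d - T • f' t‖]
  have hends := hmono (left_mem_Icc.2 hab) (right_mem_Icc.2 hab) hab
  have hdd : ⟪d, f b⟫ - ⟪d, f a⟫ = ‖d‖ ^ 2 := by
    rw [← inner_sub_right, ← hd, real_inner_self_eq_norm_sq]
  refine le_of_mul_le_mul_left ?_ hT
  linear_combination hends - 2 * T * hdd

variable {A : ℝ → E →ₗ[ℝ] E} {x : ℝ → E}

theorem hasDerivWithinAt_norm_sq_of_isIntegralCurveOn {s : Set ℝ}
    (hx : IsIntegralCurveOn x (fun t y => -A t y) s) {t : ℝ} (ht : t ∈ s) :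
    HasDerivWithinAt (‖x ·‖ ^ 2) (-(2 * ⟪A t (x t), x t⟫)) s t :=
  (hx t ht).norm_sq.congr_deriv (by rw [inner_neg_right, real_inner_comm, mul_neg])

theorem antitoneOn_norm_sq_of_isIntegralCurveOn {s : Set ℝ} (hs : Convex ℝ s)
    (hA : ∀ t ∈ s, ∀ v, 0 ≤ ⟪A t v, v⟫) (hx : IsIntegralCurveOn x (fun t y => -A t y) s) :
    AntitoneOn (‖x ·‖ ^ 2) s := by
  have hderiv (t) (ht : t ∈ s) := hasDerivWithinAt_norm_sq_of_isIntegralCurveOn hx ht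
  refine antitoneOn_of_hasDerivWithinAt_nonpos hs (fun t ht => (hderiv t ht).continuousWithinAt)
    (fun t ht => (hderiv t (interior_subset ht)).mono interior_subset) fun t ht => ?_
  linarith [hA t (interior_subset ht) (x t)]

theorem norm_sub_sq_le_of_isIntegralCurveOn (hab : a ≤ b)
    (hA : ∀ t ∈ Icc a b, IsFirmlyNonexpansive (A t))
    (hx : IsIntegralCurveOn x (fun t y => -A t y) (Icc a b)) :
    ‖x b - x a‖ ^ 2 ≤ (b - a) * ((‖x a‖ ^ 2 - ‖x b‖ ^ 2) / 2) := by
  have hg (t) (ht : t ∈ Icc a b) :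
      HasDerivWithinAt (fun s => -(‖x s‖ ^ 2 / 2)) ⟪A t (x t), x t⟫ (Icc a b) t :=
    ((hasDerivWithinAt_norm_sq_of_isIntegralCurveOn hx ht).div_const 2).neg.congr_deriv (by ring)
  refine (norm_sub_sq_le_mul_sub_of_norm_deriv_sq_le hab hx hg fun t ht => ?_).trans_eq (by ring)
  rw [norm_neg]
  exact hA t ht (x t)

theorem integral_inner_le_of_isIntegralCurveOn (hab : a ≤ b)
    (hA : ∀ t ∈ Icc a b, IsFirmlyNonexpansive (A t))
    (hint : IntervalIntegrable (fun t => ⟪A t (x a), x a⟫) volume a b)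
    (hx : IsIntegralCurveOn x (fun t y => -A t y) (Icc a b)) :
    ∫ t in a..b, ⟪A t (x a), x a⟫ ≤ (1 + (b - a) ^ 2) * (‖x a‖ ^ 2 - ‖x b‖ ^ 2) := by
  set L := ‖x a‖ ^ 2 - ‖x b‖ ^ 2 with hL
  have hanti := antitoneOn_norm_sq_of_isIntegralCurveOn (convex_Icc a b)
    (fun t ht => (hA t ht).inner_nonneg) hx
  have hpointwise (t) (ht : t ∈ Icc a b) :
      ⟪A t (x a), x a⟫ ≤ (b - a) * L + 2 * ⟪A t (x t), x t⟫ := by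
    have hdrift : ‖x t - x a‖ ^ 2 ≤ (b - a) * (L / 2) := by
      have hsub : Icc a t ⊆ Icc a b := Icc_subset_Icc_right ht.2
      have hloss : ‖x a‖ ^ 2 - ‖x t‖ ^ 2 ≤ L :=
        sub_le_sub_left (hanti ht (right_mem_Icc.2 hab) ht.2) _
      have hloss₀ : 0 ≤ ‖x a‖ ^ 2 - ‖x t‖ ^ 2 :=
        sub_nonneg.2 (hanti (left_mem_Icc.2 hab) ht ht.1)
      calc ‖x t - x a‖ ^ 2 ≤ (t - a) * ((‖x a‖ ^ 2 - ‖x t‖ ^ 2) / 2) :=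
            norm_sub_sq_le_of_isIntegralCurveOn ht.1 (fun s hs => hA s (hsub hs)) (hx.mono hsub)
        _ ≤ (b - a) * (L / 2) := by
            gcongr
            exact ht.2
    have hsplit := (hA t ht).inner_sub_le (x t) (x t - x a)
    rw [sub_sub_cancel] at hsplit
    linarith
  have hderiv (t) (ht : t ∈ Icc a b) : HasDerivWithinAt (fun s => s * ((b - a) * L) - ‖x s‖ ^ 2)
      (1 * ((b - a) * L) - -(2 * ⟪A t (x t), x t⟫)) (Icc a b) t :=
    ((hasDerivWithinAt_id t _).mul_const _).sub
      (hasDerivWithinAt_norm_sq_of_isIntegralCurveOn hx ht)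
  refine (intervalIntegral.integral_le_sub_of_hasDeriv_right_of_le hab
    (fun t ht => (hderiv t ht).continuousWithinAt)
    (fun t ht => ((hderiv t (Ioo_subset_Icc_self ht)).hasDerivAt
      (Icc_mem_nhds ht.1 ht.2)).hasDerivWithinAt)
    ((intervalIntegrable_iff_integrableOn_Icc_of_le hab).1 hint)
    fun t ht => (hpointwise t (Ioo_subset_Icc_self ht)).trans_eq (by ring)).trans_eq ?_
  rw [hL]
  ring

end Dissipation

section Excitation

variable {E : Type*} [NormedAddCommGroup E] [InnerProductSpace ℝ E] {A : ℝ → E →ₗ[ℝ] E}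

/-- Excitation of a family of operators along consecutive intervals `[τ i, τ (i + 1)]`, with weights
`ε / (1 + T ^ 2)` in place of `δ(ε, T)`. It is expressed through quadratic forms instead of the
integral of an operator-valued map, and includes their integrability because the integral of a
non-integrable function is `0`. -/
def IsSuffExciting (A : ℝ → E →ₗ[ℝ] E) : Prop :=
  ∃ ε τ : ℕ → ℝ, (∀ i, 0 ≤ ε i) ∧ 0 ≤ τ 0 ∧ Monotone τ ∧
    (∀ i v, IntervalIntegrable (fun t => ⟪A t v, v⟫) volume (τ i) (τ (i + 1))) ∧
    (∀ i v, ε i * ‖v‖ ^ 2 ≤ ∫ t in τ i..τ (i + 1), ⟪A t v, v⟫) ∧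
    Tendsto (fun N => ∑ i ∈ Finset.range N, ε i / (1 + (τ (i + 1) - τ i) ^ 2)) atTop atTop

theorem le_sub_of_forall_mul_norm_sq_le_integral [Nontrivial E] {a b ε : ℝ} (hab : a ≤ b)
    (hA : ∀ t ∈ Icc a b, IsFirmlyNonexpansive (A t))
    (hint : ∀ v, IntervalIntegrable (fun t => ⟪A t v, v⟫) volume a b)
    (hε : ∀ v, ε * ‖v‖ ^ 2 ≤ ∫ t in a..b, ⟪A t v, v⟫) : ε ≤ b - a := by
  obtain ⟨v, hv⟩ := exists_norm_eq E zero_le_one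
  calc ε = ε * ‖v‖ ^ 2 := by rw [hv, one_pow, mul_one]
    _ ≤ ∫ t in a..b, ⟪A t v, v⟫ := hε v
    _ ≤ ∫ _ in a..b, ‖v‖ ^ 2 := intervalIntegral.integral_mono_on hab (hint v)
      intervalIntegrable_const fun t ht => (hA t ht).inner_le_norm_sq v
    _ = b - a := by rw [intervalIntegral.integral_const, hv, one_pow, smul_eq_mul, mul_one]

theorem stmt6_general (hA : ∀ t ∈ Ici (0 : ℝ), IsFirmlyNonexpansive (A t))
    (hexc : IsSuffExciting A) {x : ℝ → E}
    (hx : IsIntegralCurveOn x (fun t y => -A t y) (Ici 0)) : Tendsto x atTop (𝓝 0) := by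
  obtain ⟨ε, τ, hε, hτ₀, hτ, hint, hexc, hdiv⟩ := hexc
  have hτ_nonneg (i : ℕ) : 0 ≤ τ i := hτ₀.trans (hτ i.zero_le)
  have hloss (i : ℕ) : ε i / (1 + (τ (i + 1) - τ i) ^ 2) * ‖x (τ i)‖ ^ 2 ≤
      ‖x (τ i)‖ ^ 2 - ‖x (τ (i + 1))‖ ^ 2 := by
    have hsub : Icc (τ i) (τ (i + 1)) ⊆ Ici 0 := fun t ht => (hτ_nonneg i).trans ht.1
    rw [div_mul_eq_mul_div, div_le_iff₀' (by positivity)]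
    exact (hexc i _).trans (integral_inner_le_of_isIntegralCurveOn (hτ i.le_succ)
      (fun t ht => hA t (hsub ht)) (hint i _) (hx.mono hsub))
  have hanti : AntitoneOn (‖x ·‖ ^ 2) (Ici 0) := antitoneOn_norm_sq_of_isIntegralCurveOn
    (convex_Ici 0) (fun t ht => (hA t ht).inner_nonneg) hx
  have henergy : Tendsto (‖x ·‖ ^ 2) atTop (𝓝 0) :=
    tendsto_atTop_of_antitoneOn_of_tendsto_comp hanti (fun _ _ => sq_nonneg _) hτ_nonneg
      (tendsto_zero_of_mul_le_sub_succ (fun i => div_nonneg (hε i) (by positivity))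
        (fun _ => sq_nonneg _) hloss hdiv)
  rw [tendsto_zero_iff_norm_tendsto_zero]
  simpa using henergy.sqrt

end Excitation

section Matrices

variable {m n : Type*} [Fintype m] [Fintype n]

theorem eunorm_eq_norm_toLp (v : n → ℝ) : eunorm v = ‖WithLp.toLp 2 v‖ := by
  simp [eunorm, EuclideanSpace.norm_eq]

theorem nonempty_of_sigmaMin_pos {M : Matrix m n ℝ} (hM : 0 < sigmaMin M) : Nonempty n := by
  by_contra hn
  rw [not_nonempty_iff] at hn
  simp [sigmaMin, eunorm] at hM

variable [DecidableEq n]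

theorem specNorm_eq_norm_toEuclideanLin (M : Matrix m n ℝ) :
    specNorm M = ‖(toEuclideanLin M).toContinuousLinearMap‖ := by
  rw [← ContinuousLinearMap.sSup_unitClosedBall_eq_norm, specNorm]
  congr 1
  ext c
  simp only [eunorm_eq_norm_toLp, mem_ofPred_eq, mem_image, mem_closedBall_zero_iff]
  exact ⟨fun ⟨v, hv, hc⟩ => ⟨WithLp.toLp 2 v, hv, hc.symm⟩, fun ⟨v, hv, hc⟩ => ⟨v, hv, hc.symm⟩⟩

theorem sigmaMin_le_norm_toEuclideanLin (M : Matrix m n ℝ) {v : EuclideanSpace ℝ n}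
    (hv : ‖v‖ = 1) : sigmaMin M ≤ ‖toEuclideanLin M v‖ := by
  refine csInf_le ⟨0, ?_⟩ ⟨v, (eunorm_eq_norm_toLp v).trans hv, (eunorm_eq_norm_toLp _).symm⟩
  rintro _ ⟨w, -, rfl⟩
  exact Real.sqrt_nonneg _

theorem InQbar.isFirmlyNonexpansive_toEuclideanLin {k : ℕ} {R : Matrix (Fin k) (Fin k) ℝ}
    (hR : InQbar R) : IsFirmlyNonexpansive (toEuclideanLin R) := by
  have hnorm : ‖(toEuclideanLin R).toContinuousLinearMap‖ ≤ 1 :=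
    (specNorm_eq_norm_toEuclideanLin R).symm.trans_le hR.2
  refine .of_isPositive (isPositive_toEuclideanLin_iff.2 hR.1) fun v => ?_
  simpa using (toEuclideanLin R).toContinuousLinearMap.le_of_opNorm_le hnorm v

theorem inner_toEuclideanLin_eq_sum (M : Matrix m n ℝ) (v : EuclideanSpace ℝ n)
    (w : EuclideanSpace ℝ m) :
    ⟪toEuclideanLin M v, w⟫ = ∑ i, ∑ j, M i j * (v j * w i) := by
  simp only [PiLp.inner_apply, ofLp_toLpLin, toLin'_apply, mulVec, dotProduct, RCLike.inner_apply,
    conj_trivial, mul_comm (w _), Finset.sum_mul, mul_assoc]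

section Integral

theorem intervalIntegrable_sum_apply {ι F : Type*} [Fintype ι] [NormedAddCommGroup F]
    {f : ℝ → ι → F} {a b : ℝ} {μ : Measure ℝ}
    (hf : ∀ i, IntervalIntegrable (fun t => f t i) μ a b) :
    IntervalIntegrable (fun t => ∑ i, f t i) μ a b := by
  simpa only [Finset.sum_fn] using IntervalIntegrable.sum Finset.univ fun i _ => hf i

variable {Q : ℝ → Matrix m n ℝ} {a b : ℝ}

theorem intervalIntegrable_inner_toEuclideanLin
    (hQ : ∀ i j, IntervalIntegrable (fun t => Q t i j) volume a b) (v : EuclideanSpace ℝ n)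
    (w : EuclideanSpace ℝ m) :
    IntervalIntegrable (fun t => ⟪toEuclideanLin (Q t) v, w⟫) volume a b := by
  simp only [inner_toEuclideanLin_eq_sum]
  exact intervalIntegrable_sum_apply fun i =>
    intervalIntegrable_sum_apply fun j => (hQ i j).mul_const _

theorem inner_toEuclideanLin_integral
    (hQ : ∀ i j, IntervalIntegrable (fun t => Q t i j) volume a b) (v : EuclideanSpace ℝ n)
    (w : EuclideanSpace ℝ m) :
    ⟪toEuclideanLin (Matrix.of fun i j => ∫ t in a..b, Q t i j) v, w⟫ =
      ∫ t in a..b, ⟪toEuclideanLin (Q t) v, w⟫ := by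
  have hentry (i : m) (j : n) :
      IntervalIntegrable (fun t => Q t i j * (v j * w i)) volume a b := (hQ i j).mul_const _
  have hrow (i : m) :
      IntervalIntegrable (fun t => ∑ j, Q t i j * (v j * w i)) volume a b :=
    intervalIntegrable_sum_apply fun j => hentry i j
  simp only [inner_toEuclideanLin_eq_sum, of_apply]
  rw [intervalIntegral.integral_finsetSum fun i _ => hrow i]
  congr! 1 with i
  rw [intervalIntegral.integral_finsetSum fun j _ => hentry i j]
  simp only [intervalIntegral.integral_mul_const]

variable {P : ℝ → Matrix n n ℝ}

theorem isPositive_toEuclideanLin_integral (hab : a ≤ b)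
    (hP : ∀ i j, IntervalIntegrable (fun t => P t i j) volume a b)
    (hpos : ∀ t ∈ Icc a b, (P t).PosSemidef) :
    (toEuclideanLin (Matrix.of fun i j => ∫ t in a..b, P t i j)).IsPositive := by
  have hpos' (t) (ht : t ∈ Icc a b) := isPositive_toEuclideanLin_iff.2 (hpos t ht)
  refine (LinearMap.isPositive_iff _).2 ⟨fun v w => ?_, fun v => ?_⟩
  · rw [real_inner_comm _ v, inner_toEuclideanLin_integral hP, inner_toEuclideanLin_integral hP]
    refine intervalIntegral.integral_congr fun t ht => ?_
    rw [uIcc_of_le hab] at ht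
    exact ((hpos' t ht).isSymmetric v w).trans (real_inner_comm _ _)
  · rw [inner_toEuclideanLin_integral hP]
    exact intervalIntegral.integral_nonneg hab fun t ht => (hpos' t ht).inner_nonneg_left v

theorem sigmaMin_integral_mul_norm_sq_le (hab : a ≤ b)
    (hP : ∀ i j, IntervalIntegrable (fun t => P t i j) volume a b)
    (hpos : ∀ t ∈ Icc a b, (P t).PosSemidef) (v : EuclideanSpace ℝ n) :
    sigmaMin (Matrix.of fun i j => ∫ t in a..b, P t i j) * ‖v‖ ^ 2 ≤
      ∫ t in a..b, ⟪toEuclideanLin (P t) v, v⟫ := by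
  rw [← inner_toEuclideanLin_integral hP]
  exact mul_norm_sq_le_inner_of_forall_le_norm (isPositive_toEuclideanLin_integral hab hP hpos)
    (fun _ => sigmaMin_le_norm_toEuclideanLin _) v

end Integral

theorem isIntegralCurveOn_toLp {Q : ℝ → Matrix n n ℝ} {x : ℝ → n → ℝ} {s : Set ℝ}
    (hx : ∀ t ∈ s, ∀ i, HasDerivAt (fun u => x u i) (-(Q t *ᵥ x t) i) t) :
    IsIntegralCurveOn (fun t => WithLp.toLp 2 (x t)) (fun t y => -toEuclideanLin (Q t) y) s := by
  intro t ht
  have hderiv := hasDerivAt_pi.2 (hx t ht)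
  exact ((PiLp.continuousLinearEquiv 2 ℝ (fun _ : n => ℝ)).symm.hasFDerivAt.comp_hasDerivAt t
    hderiv).hasDerivWithinAt

theorem SuffExcitingCT.isSuffExciting_toEuclideanLin {k : ℕ}
    {Q : ℝ → Matrix (Fin k) (Fin k) ℝ} (hQse : SuffExcitingCT Q)
    (hQ : ∀ t : ℝ, 0 ≤ t → InQbar (Q t))
    (hQint : ∀ i j, ∀ s u : ℝ, IntervalIntegrable (fun t => Q t i j) volume s u) :
    IsSuffExciting fun t => toEuclideanLin (Q t) := by
  obtain ⟨ε, T, hε, hT, hσ, hδ⟩ := hQse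
  set τ : ℕ → ℝ := fun i => ∑ j ∈ Finset.range i, T j
  have hτ_succ (i : ℕ) : τ (i + 1) = τ i + T i := Finset.sum_range_succ _ _
  have hτ : Monotone τ := monotone_nat_of_le_succ fun i => by linarith [hτ_succ i, hT i]
  have hQτ (i : ℕ) : ∀ t ∈ Icc (τ i) (τ (i + 1)), InQbar (Q t) := fun t ht =>
    hQ t ((Finset.sum_nonneg fun j _ => (hT j).le).trans ht.1)
  have hint (i : ℕ) (v : EuclideanSpace ℝ (Fin k)) : IntervalIntegrable
      (fun t => ⟪toEuclideanLin (Q t) v, v⟫) volume (τ i) (τ (i + 1)) :=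
    intervalIntegrable_inner_toEuclideanLin (fun i j => hQint i j _ _) v v
  have hexc (i : ℕ) (v : EuclideanSpace ℝ (Fin k)) :
      ε i * ‖v‖ ^ 2 ≤ ∫ t in τ i..τ (i + 1), ⟪toEuclideanLin (Q t) v, v⟫ := by
    refine le_trans ?_ (sigmaMin_integral_mul_norm_sq_le (hτ i.le_succ)
      (fun i j => hQint i j _ _) (fun t ht => (hQτ i t ht).1) v)
    rw [hτ_succ]
    gcongr
    exact hσ i
  have hweight (i : ℕ) : deltaCT (ε i) (T i) ≤ ε i / (1 + (τ (i + 1) - τ i) ^ 2) := by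
    have : Nonempty (Fin k) := nonempty_of_sigmaMin_pos ((hε i).trans_le (hσ i))
    have hεT := le_sub_of_forall_mul_norm_sq_le_integral (hτ i.le_succ)
      (fun t ht => (hQτ i t ht).isFirmlyNonexpansive_toEuclideanLin) (hint i) (hexc i)
    rw [hτ_succ, add_sub_cancel_left] at hεT ⊢
    exact deltaCT_le_div_one_add_sq (hε i) hεT
  exact ⟨ε, τ, fun i => (hε i).le, le_rfl, hτ, hint, hexc,
    tendsto_atTop_mono (fun N => Finset.sum_le_sum fun i _ => hweight i) hδ⟩

end Matrices

theorem stmt6 {n : ℕ}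
    (Q : ℝ → Matrix (Fin n) (Fin n) ℝ)
    (hQ : ∀ t : ℝ, 0 ≤ t → InQbar (Q t))
    (hQint : ∀ a b : Fin n, ∀ s u : ℝ, IntervalIntegrable (fun t => Q t a b) volume s u)
    (hQse : SuffExcitingCT Q)
    (x : ℝ → Fin n → ℝ)
    (hx : ∀ t : ℝ, 0 ≤ t → ∀ a : Fin n,
      HasDerivAt (fun s => x s a) (-((Q t).mulVec (x t)) a) t) :
    Tendsto (fun t => eunorm (x t)) atTop (nhds 0) := by
  simpa only [eunorm_eq_norm_toLp, norm_zero] using (stmt6_general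
    (fun t ht => (hQ t ht).isFirmlyNonexpansive_toEuclideanLin)
    (hQse.isSuffExciting_toEuclideanLin hQ hQint) (isIntegralCurveOn_toLp hx)).norm
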